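/- Let H be a 2-full, marked, aperiodic and primitive substitution over a finite alphabet A. Then there exists a continuous function U : A^ℕ → ℝ such that R(U) = U, U vanishes identically on K, and U(x) > 0 for every x ∈ A^ℕ \ K. -/

import Mathlib

open Filter Topology MeasureTheory

variable {A : Type*}

/-- The shift map on infinite words. -/
def shift (x : ℕ → A) : ℕ → A := fun n => x (n + 1)

/-- Image of a finite word under a substitution. -/
def wordMap (H : A → List A) (w : List A) : List A := w.flatMap H

/-- Image of an infinite word under a substitution (each `H a` nonempty makes this the
infinite concatenation `H(x₀)H(x₁)⋯`). -/
def substSeq (H : A → List A) (x : ℕ → A) : ℕ → A :=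
  fun n => (wordMap H ((List.range (n + 1)).map x)).getD n (x 0)

/-- The prefix of length `n` of an infinite word. -/
def prefixWord (x : ℕ → A) (n : ℕ) : List A := (List.range n).map x

/-- The factor of length `n` at position `i` of an infinite word. -/
def factorAt (x : ℕ → A) (i n : ℕ) : List A := (List.range n).map fun j => x (i + j)

/-- The language of an infinite word: the set of its finite factors. -/
def Lang (u : ℕ → A) : Set (List A) := {w | ∃ i, w = factorAt u i w.length}

/-- A sequence is (purely) periodic for the shift. -/
def PeriodicSeq (x : ℕ → A) : Prop := ∃ m, 0 < m ∧ ∀ n, x (n + m) = x n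

/-- `u` is a fixed point of the substitution `H`. -/
def IsFixedPointSubst (H : A → List A) (u : ℕ → A) : Prop := substSeq H u = u

/-- `H` is primitive: some power of `H` maps every letter onto a word containing
every letter. -/
def PrimitiveSubst (H : A → List A) : Prop :=
  ∃ k, 0 < k ∧ ∀ a b : A, b ∈ (wordMap H)^[k] [a]

/-- `H` is aperiodic: no fixed point of `H` is periodic for the shift. -/
def AperiodicSubst (H : A → List A) : Prop :=
  ∀ u : ℕ → A, IsFixedPointSubst H u → ¬ PeriodicSeq u

/-- `H` is marked: first letters of images are pairwise distinct, and so are last letters. -/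
def MarkedSubst (H : A → List A) (hne : ∀ a, H a ≠ []) : Prop :=
  Function.Injective (fun a => (H a).head (hne a)) ∧
  Function.Injective (fun a => (H a).getLast (hne a))

/-- `H` is 2-full (with respect to the fixed point `u`): every word of length 2 belongs
to the language. -/
def TwoFull (H : A → List A) (u : ℕ → A) : Prop :=
  ∀ w : List A, w.length = 2 → w ∈ Lang u

/-- The attractor `K`: closure of the shift-orbit of the fixed point `u`. -/
def orbitClosure [TopologicalSpace A] (u : ℕ → A) : Set (ℕ → A) :=
  closure {y | ∃ n, y = shift^[n] u}

/-- `δ(x)`: the length of the maximal prefix of `x` belonging to the language of `u`. -/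
noncomputable def delta (u x : ℕ → A) : ℕ := sSup {n | prefixWord x n ∈ Lang u}

/-- The renormalization operator `R`. -/
noncomputable def renorm (H : A → List A) (V : (ℕ → A) → ℝ) : (ℕ → A) → ℝ :=
  fun x => ∑ i ∈ Finset.range (H (x 0)).length, V (shift^[i] (substSeq H x))

/-- `t_n(x) = |H^n(x₀)|`. -/
def tlen (H : A → List A) (n : ℕ) (x : ℕ → A) : ℕ := ((wordMap H)^[n] [x 0]).length

/-- An accident occurs at time `b`. -/
def AccidentAt (u x : ℕ → A) (b : ℕ) : Prop :=
  0 < b ∧ delta u x - b < delta u (shift^[b] x) ∧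
    ∀ i < b, delta u (shift^[i] x) = delta u x - i

/-- The first accident time of `x` (junk value `0` if there is none). -/
noncomputable def firstAccident (u x : ℕ → A) : ℕ := sInf {b | AccidentAt u x b}

/-- The `j`-th accident time `B_j` of `x`, defined inductively. -/
noncomputable def accidentTime (u x : ℕ → A) : ℕ → ℕ
  | 0 => 0
  | j + 1 => accidentTime u x j + firstAccident u (shift^[accidentTime u x j] x)

/-- The set of (genuine) accident times of `x`. -/
def AccidentSet (u x : ℕ → A) : Set ℕ :=
  {B | ∃ j : ℕ, B = accidentTime u x (j + 1) ∧
        AccidentAt u (shift^[accidentTime u x j] x)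
          (firstAccident u (shift^[accidentTime u x j] x))}

/-- A word is right special. -/
def RightSpecial (u : ℕ → A) (w : List A) : Prop :=
  ∃ b c : A, b ≠ c ∧ w ++ [b] ∈ Lang u ∧ w ++ [c] ∈ Lang u

/-- A word is left special. -/
def LeftSpecial (u : ℕ → A) (w : List A) : Prop :=
  ∃ a b : A, a ≠ b ∧ a :: w ∈ Lang u ∧ b :: w ∈ Lang u

/-- A word is bispecial. -/
def Bispecial (u : ℕ → A) (w : List A) : Prop := RightSpecial u w ∧ LeftSpecial u w

/-- `l` is a recognizability constant for `H`: every long enough word of the language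
admits a unique desubstitution. -/
def RecogBound (H : A → List A) (u : ℕ → A) (l : ℕ) : Prop :=
  ∀ z ∈ Lang u, l < z.length →
    ∃! d : List A × List A × List A,
      ∃ s p : A,
        z = d.1 ++ wordMap H d.2.1 ++ d.2.2 ∧
        d.2.1 ∈ Lang u ∧
        d.1 <:+ H s ∧ d.1.length < (H s).length ∧
        d.2.2 <+: H p ∧ d.2.2.length < (H p).length ∧
        ([s] ++ d.2.1 ++ [p]) ∈ Lang u

/-- The incidence matrix of a substitution, with real entries. -/
def incMat [Fintype A] [DecidableEq A] (H : A → List A) : Matrix A A ℝ :=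
  fun a b => ((H a).count b : ℝ)

/-- `lam` is the Perron–Frobenius eigenvalue of the incidence matrix of the (primitive)
substitution `H`: it admits an entrywise positive eigenvector. -/
def IsPerronValue [Fintype A] [DecidableEq A] (H : A → List A) (lam : ℝ) : Prop :=
  ∃ v : A → ℝ, (∀ a, 0 < v a) ∧ (incMat H).mulVec v = lam • v

/-- Concatenation of a finite word with an infinite word. -/
def catWord (S : List A) (y : ℕ → A) : ℕ → A :=
  fun n => S.getD n (y (n - S.length))

/-!
Call a word legal if it belongs to the language of `u`. Let `λ` and `v` be a Perron–Frobenius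
eigenvalue of `H` and the corresponding letter weights, so that `H` multiplies the weight of every
word by `λ`. For `x ∉ K` with longest legal prefix of weight `S`, put
`V(x) = log S - log (S - v(x₀))`, and put `V = 0` on `K`. Along the block `H(x₀)` of `H(x)` the
values of `V` telescope to `log (λ S) - log (λ S - λ v(x₀)) = V(x)`, provided that the longest legal
prefix of each tail of `H(x)` starting in `H(x₀)` ends where the image of the longest legal prefix
of `x` does. As `H` is marked and aperiodic, long legal factors of `H(x)` desubstitute uniquely, so
this proviso, and with it `R(V) = V`, holds for all `x` near `K`. Finally `H` is 2-full, so the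
first two blocks of `Hᵐ(x)` are always legal; hence `Rᵐ` only evaluates its argument near `K` once
`m` is large, `Rᵐ(R(V)) = Rᵐ(V)`, and `U = Rᵐ(V)` is the fixed potential.
-/

/-! ### Perron–Frobenius eigenvectors of primitive matrices -/

section PerronFrobenius

variable {n : Type*} [Fintype n]

theorem mulVec_pos_of_pos {P : Matrix n n ℝ} (hP : ∀ i j, 0 < P i j) {z : n → ℝ} (hz : 0 ≤ z)
    (hz0 : z ≠ 0) (i : n) : 0 < P.mulVec z i := by
  obtain ⟨j, hj⟩ := Function.ne_iff.mp hz0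
  exact Finset.sum_pos' (fun j _ => mul_nonneg (hP i j).le (hz j))
    ⟨j, Finset.mem_univ j, mul_pos (hP i j) ((hz j).lt_of_ne' hj)⟩

/-- The Collatz–Wielandt function `w ↦ min_i (M w)_i / w_i` on entrywise positive vectors, whose
maximum is the Perron–Frobenius eigenvalue of `M`. -/
noncomputable def collatzWielandt [Nonempty n] (M : Matrix n n ℝ) (w : n → ℝ) : ℝ :=
  Finset.univ.inf' Finset.univ_nonempty fun i => M.mulVec w i / w i

variable [Nonempty n] {M : Matrix n n ℝ} {w : n → ℝ}

theorem collatzWielandt_mul_le (hw : ∀ i, 0 < w i) (i : n) :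
    collatzWielandt M w * w i ≤ M.mulVec w i :=
  (le_div_iff₀ (hw i)).mp (Finset.inf'_le _ (Finset.mem_univ i))

theorem lt_collatzWielandt (hw : ∀ i, 0 < w i) {t : ℝ} (ht : ∀ i, t * w i < M.mulVec w i) :
    t < collatzWielandt M w :=
  (Finset.lt_inf'_iff _).mpr fun i _ => (lt_div_iff₀ (hw i)).mpr (ht i)

theorem continuousOn_collatzWielandt (M : Matrix n n ℝ) :
    ContinuousOn (collatzWielandt M) {w | ∀ i, 0 < w i} :=
  ContinuousOn.finset_inf'_apply _ fun i _ =>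
    (((continuous_apply i).comp (continuous_const.matrix_mulVec continuous_id)).continuousOn).div
      (continuous_apply i).continuousOn fun _ hw => (hw i).ne'

theorem collatzWielandt_lt_of_mulVec_ne [DecidableEq n] {k : ℕ} (hk : ∀ i j, 0 < (M ^ k) i j)
    (hw : ∀ i, 0 < w i) (hne : M.mulVec w ≠ collatzWielandt M w • w) :
    collatzWielandt M w < collatzWielandt M ((M ^ k).mulVec w) := by
  have hnonneg : 0 ≤ M.mulVec w - collatzWielandt M w • w := fun i =>
    sub_nonneg.mpr (collatzWielandt_mul_le hw i)
  have hw0 : w ≠ 0 := fun h => (hw (Classical.arbitrary n)).ne' (congrFun h _)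
  refine lt_collatzWielandt (mulVec_pos_of_pos hk (fun i => (hw i).le) hw0) fun i => ?_
  have hgap := mulVec_pos_of_pos hk hnonneg (sub_ne_zero.mpr hne) i
  rw [Matrix.mulVec_sub, Matrix.mulVec_smul, Matrix.mulVec_mulVec, ← pow_succ, pow_succ',
    ← Matrix.mulVec_mulVec] at hgap
  exact sub_pos.mp hgap

theorem collatzWielandt_smul {c : ℝ} (hc : c ≠ 0) :
    collatzWielandt M (c • w) = collatzWielandt M w := by
  simp [collatzWielandt, Matrix.mulVec_smul, mul_div_mul_left _ _ hc]

/-- A maximizer of the Collatz–Wielandt function on the image of the simplex under `M ^ k > 0` is an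
eigenvector, since otherwise applying `M ^ k` once more would increase the function. -/
theorem exists_pos_eigenvector_of_isPrimitive [DecidableEq n] (hM : M.IsPrimitive) :
    ∃ (r : ℝ) (v : n → ℝ), (∀ i, 0 < v i) ∧ M.mulVec v = r • v := by
  obtain ⟨-, k, -, hk⟩ := hM
  have hpos : ∀ w ∈ stdSimplex ℝ n, ∀ i, 0 < (M ^ k).mulVec w i := fun w hw =>
    mulVec_pos_of_pos hk hw.1 fun h => by simpa [h] using hw.2
  have hcompact : IsCompact ((M ^ k).mulVec '' stdSimplex ℝ n) :=
    (isCompact_stdSimplex ℝ n).image (continuous_const.matrix_mulVec continuous_id)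
  obtain ⟨v, ⟨v', hv', rfl⟩, hmax⟩ := hcompact.exists_isMaxOn
    ((Set.nonempty_coe_sort.mp inferInstance).image _)
    ((continuousOn_collatzWielandt M).mono (Set.image_subset_iff.mpr hpos))
  set v := (M ^ k).mulVec v'
  have hv : ∀ i, 0 < v i := hpos v' hv'
  have hsum : 0 < ∑ i, v i := Finset.sum_pos (fun i _ => hv i) Finset.univ_nonempty
  have hvs : (∑ i, v i)⁻¹ • v ∈ stdSimplex ℝ n :=
    ⟨fun i => mul_nonneg (inv_nonneg.mpr hsum.le) (hv i).le, by
      simp [← Finset.mul_sum, hsum.ne']⟩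
  refine ⟨collatzWielandt M v, v, hv, ?_⟩
  by_contra hne
  refine (collatzWielandt_lt_of_mulVec_ne hk hv hne).not_ge ?_
  have := hmax (Set.mem_image_of_mem _ hvs)
  rwa [Matrix.mulVec_smul, Set.mem_ofPred_eq, collatzWielandt_smul (inv_ne_zero hsum.ne')] at this

end PerronFrobenius

/-! ### Prefixes and the language of an infinite word -/

section Words

variable {x y u : ℕ → A} {m n i : ℕ} {w z : List A}

theorem shift_iterate_apply (x : ℕ → A) (i j : ℕ) : shift^[i] x j = x (i + j) := by
  induction i generalizing x with
  | zero => simp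
  | succ i ih => rw [Function.iterate_succ_apply, ih, shift, Nat.add_right_comm]

theorem length_prefixWord (x : ℕ → A) (n : ℕ) : (prefixWord x n).length = n := by
  simp [prefixWord]

theorem prefixWord_succ' (x : ℕ → A) (n : ℕ) :
    prefixWord x (n + 1) = x 0 :: prefixWord (shift x) n := by
  simp [prefixWord, List.range_succ_eq_map, Function.comp_def, shift]

theorem prefixWord_add (x : ℕ → A) (m n : ℕ) :
    prefixWord x (m + n) = prefixWord x m ++ prefixWord (shift^[m] x) n := by
  simp [prefixWord, List.range_add, Function.comp_def, shift_iterate_apply]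

theorem prefixWord_succ (x : ℕ → A) (n : ℕ) : prefixWord x (n + 1) = prefixWord x n ++ [x n] := by
  simp [prefixWord, List.range_succ]

theorem prefixWord_eq_iff : prefixWord x n = prefixWord y n ↔ ∀ j < n, x j = y j := by
  simp [prefixWord]

theorem eq_of_forall_prefixWord_eq (h : ∀ n, ∃ m ≥ n, prefixWord x m = prefixWord y m) : x = y := by
  funext j
  obtain ⟨m, hm, hxy⟩ := h (j + 1)
  exact prefixWord_eq_iff.mp hxy j hm

theorem prefixWord_isPrefix (x : ℕ → A) (h : m ≤ n) : prefixWord x m <+: prefixWord x n := by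
  obtain ⟨k, rfl⟩ := Nat.exists_eq_add_of_le h
  exact prefixWord_add x m k ▸ List.prefix_append _ _

theorem prefixWord_shift_isSuffix (x : ℕ → A) (i n : ℕ) :
    prefixWord (shift^[i] x) n <:+ prefixWord x (i + n) :=
  prefixWord_add x i n ▸ List.suffix_append _ _

theorem prefixWord_shift_isInfix (x : ℕ → A) (h : i + n ≤ m) :
    prefixWord (shift^[i] x) n <:+: prefixWord x m :=
  (prefixWord_shift_isSuffix x i n).isInfix.trans (prefixWord_isPrefix x h).isInfix

theorem isInfix_prefixWord_iff :
    w <:+: prefixWord x n ↔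
      ∃ i, i + w.length ≤ n ∧ w = prefixWord (shift^[i] x) w.length := by
  constructor
  · rintro ⟨s, t, h⟩
    obtain rfl : n = s.length + w.length + t.length := by
      simpa [length_prefixWord, add_assoc] using (congrArg List.length h).symm
    rw [prefixWord_add, prefixWord_add] at h
    have hsw := (List.append_inj h (by simp [length_prefixWord])).1
    exact ⟨s.length, Nat.le_add_right _ _,
      (List.append_inj hsw (by simp [length_prefixWord])).2⟩
  · rintro ⟨i, hi, hw⟩
    exact hw ▸ prefixWord_shift_isInfix x hi

theorem factorAt_eq_prefixWord (x : ℕ → A) (i n : ℕ) :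
    factorAt x i n = prefixWord (shift^[i] x) n := by
  simp [factorAt, prefixWord, shift_iterate_apply]

theorem prefixWord_mem_Lang_iff :
    prefixWord x n ∈ Lang u ↔ ∃ k, prefixWord x n = prefixWord (shift^[k] u) n := by
  simp [Lang, length_prefixWord, factorAt_eq_prefixWord]

theorem mem_Lang_iff_isInfix : w ∈ Lang u ↔ ∃ n, w <:+: prefixWord u n := by
  constructor
  · rintro ⟨i, hi⟩
    rw [hi, factorAt_eq_prefixWord]
    exact ⟨i + w.length, (prefixWord_shift_isSuffix u i _).isInfix⟩
  · rintro ⟨n, hn⟩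
    obtain ⟨i, -, hi⟩ := isInfix_prefixWord_iff.mp hn
    exact ⟨i, hi.trans (factorAt_eq_prefixWord u i _).symm⟩

theorem nil_mem_Lang (u : ℕ → A) : [] ∈ Lang u :=
  mem_Lang_iff_isInfix.mpr ⟨0, List.nil_infix⟩

theorem mem_Lang_of_isInfix (hzw : z <:+: w) (hw : w ∈ Lang u) : z ∈ Lang u := by
  obtain ⟨n, hn⟩ := mem_Lang_iff_isInfix.mp hw
  exact mem_Lang_iff_isInfix.mpr ⟨n, hzw.trans hn⟩

theorem prefixWord_mem_Lang_mono (hmn : m ≤ n) (h : prefixWord x n ∈ Lang u) :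
    prefixWord x m ∈ Lang u :=
  mem_Lang_of_isInfix (prefixWord_isPrefix x hmn).isInfix h

theorem exists_maximal_prefixWord_mem_Lang (hm : prefixWord x m ∈ Lang u)
    (hx : ∃ n, prefixWord x n ∉ Lang u) :
    ∃ n ≥ m, prefixWord x n ∈ Lang u ∧ prefixWord x (n + 1) ∉ Lang u := by
  by_contra! h
  obtain ⟨n, hn⟩ := hx
  have hall : ∀ k ≥ m, prefixWord x k ∈ Lang u := fun k hk => Nat.le_induction hm h k hk
  exact hn (prefixWord_mem_Lang_mono (le_max_left n m) (hall _ (le_max_right n m)))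

theorem delta_eq (h : prefixWord x n ∈ Lang u) (h' : prefixWord x (n + 1) ∉ Lang u) :
    delta u x = n := by
  have hset : {k | prefixWord x k ∈ Lang u} = Set.Iic n := by
    ext k
    refine ⟨fun hk => ?_, fun hk => prefixWord_mem_Lang_mono hk h⟩
    by_contra hnk
    exact h' (prefixWord_mem_Lang_mono (Nat.succ_le_of_lt (not_le.mp hnk)) hk)
  rw [delta, hset, csSup_Iic]

theorem prefixWord_catWord (w : List A) (y : ℕ → A) (n : ℕ) :
    prefixWord (catWord w y) (w.length + n) = w ++ prefixWord y n := by
  refine List.ext_getElem (by simp [length_prefixWord]) fun j h _ => ?_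
  by_cases hj : j < w.length
  · simp [prefixWord, catWord, hj]
  · simp [prefixWord, catWord, hj, List.getElem_append_right (not_lt.mp hj)]

theorem shift_iterate_catWord (w : List A) (y : ℕ → A) : shift^[w.length] (catWord w y) = y := by
  funext j
  simp [shift_iterate_apply, catWord]

end Words

/-! ### The action of a substitution on infinite words -/

section Substitution

variable {H : A → List A} {x y u : ℕ → A} {i m n P : ℕ}

/-- `cutPos H x n = |H(x₀ ⋯ xₙ₋₁)|`, the position in `H(x)` at which the block `H(xₙ)` begins. -/
def cutPos (H : A → List A) (x : ℕ → A) (n : ℕ) : ℕ := (wordMap H (prefixWord x n)).length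

theorem wordMap_append (H : A → List A) (v w : List A) :
    wordMap H (v ++ w) = wordMap H v ++ wordMap H w :=
  List.flatMap_append

theorem wordMap_cons (H : A → List A) (a : A) (w : List A) :
    wordMap H (a :: w) = H a ++ wordMap H w :=
  List.flatMap_cons

theorem wordMap_singleton (H : A → List A) (a : A) : wordMap H [a] = H a :=
  List.flatMap_singleton H a

theorem wordMap_ne_nil (hne : ∀ a, H a ≠ []) {w : List A} (hw : w ≠ []) : wordMap H w ≠ [] := by
  obtain ⟨a, w, rfl⟩ := List.exists_cons_of_ne_nil hw
  simp [wordMap_cons, hne]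

theorem cutPos_one (H : A → List A) (x : ℕ → A) : cutPos H x 1 = (H (x 0)).length := by
  simp [cutPos, prefixWord, wordMap]

theorem cutPos_add (H : A → List A) (x : ℕ → A) (m n : ℕ) :
    cutPos H x (m + n) = cutPos H x m + cutPos H (shift^[m] x) n := by
  simp [cutPos, prefixWord_add, wordMap_append]

theorem cutPos_succ (H : A → List A) (x : ℕ → A) (n : ℕ) :
    cutPos H x (n + 1) = cutPos H x n + (H (x n)).length := by
  simp [cutPos, prefixWord_succ, wordMap_append, wordMap_singleton]

theorem cutPos_succ' (H : A → List A) (x : ℕ → A) (n : ℕ) :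
    cutPos H x (n + 1) = (H (x 0)).length + cutPos H (shift x) n := by
  rw [add_comm n, cutPos_add, cutPos_one, Function.iterate_one]

theorem cutPos_strictMono (hne : ∀ a, H a ≠ []) (x : ℕ → A) : StrictMono (cutPos H x) :=
  strictMono_nat_of_lt_succ fun n => by
    rw [cutPos_succ]
    exact Nat.lt_add_of_pos_right (List.length_pos_of_ne_nil (hne _))

theorem le_cutPos (hne : ∀ a, H a ≠ []) (x : ℕ → A) (n : ℕ) : n ≤ cutPos H x n :=
  (cutPos_strictMono hne x).le_apply

theorem exists_cutPos_mem_Icc (hne : ∀ a, H a ≠ []) {B : ℕ} (hB : ∀ a, (H a).length ≤ B)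
    (x : ℕ → A) (i : ℕ) : ∃ n, cutPos H x n ∈ Set.Icc i (i + B) := by
  have hex : ∃ n, i ≤ cutPos H x n := ⟨i, le_cutPos hne x i⟩
  refine ⟨Nat.find hex, Nat.find_spec hex, ?_⟩
  rcases hn : Nat.find hex with _ | n
  · exact Nat.zero_le _
  · have hlt : cutPos H x n < i := not_le.mp (Nat.find_min hex (hn ▸ n.lt_succ_self))
    have := hB (x n)
    rw [cutPos_succ]
    omega

theorem substSeq_eq_getElem (hne : ∀ a, H a ≠ []) (hP : P < (wordMap H (prefixWord x n)).length) :
    substSeq H x P = (wordMap H (prefixWord x n))[P] := by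
  have hlen : P < (wordMap H (prefixWord x (P + 1))).length := le_cutPos hne x (P + 1)
  have hget : substSeq H x P = (wordMap H (prefixWord x (P + 1)))[P] :=
    List.getD_eq_getElem _ _ hlen
  rw [hget]
  rcases le_total (P + 1) n with h | h
  · exact ((prefixWord_isPrefix x h).flatMap H).getElem hlen
  · exact (((prefixWord_isPrefix x h).flatMap H).getElem hP).symm

theorem prefixWord_substSeq_cutPos (hne : ∀ a, H a ≠ []) (x : ℕ → A) (n : ℕ) :
    prefixWord (substSeq H x) (cutPos H x n) = wordMap H (prefixWord x n) := by
  refine List.ext_getElem (length_prefixWord _ _) fun P _ hP => ?_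
  rw [← substSeq_eq_getElem hne hP]
  simp [prefixWord]

theorem substSeq_eq_catWord (hne : ∀ a, H a ≠ []) (x : ℕ → A) :
    substSeq H x = catWord (H (x 0)) (substSeq H (shift x)) := by
  refine eq_of_forall_prefixWord_eq fun n =>
    ⟨cutPos H x (n + 1), (Nat.le_succ n).trans (le_cutPos hne x _), ?_⟩
  rw [prefixWord_substSeq_cutPos hne, prefixWord_succ', wordMap_cons, cutPos_succ',
    prefixWord_catWord, prefixWord_substSeq_cutPos hne]

theorem prefixWord_substSeq_length (hne : ∀ a, H a ≠ []) (x : ℕ → A) :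
    prefixWord (substSeq H x) (H (x 0)).length = H (x 0) := by
  rw [substSeq_eq_catWord hne]
  simpa [prefixWord] using prefixWord_catWord (H (x 0)) (substSeq H (shift x)) 0

theorem shift_iterate_length_substSeq (hne : ∀ a, H a ≠ []) (x : ℕ → A) :
    shift^[(H (x 0)).length] (substSeq H x) = substSeq H (shift x) := by
  rw [substSeq_eq_catWord hne, shift_iterate_catWord]

theorem shift_iterate_cutPos_substSeq (hne : ∀ a, H a ≠ []) (x : ℕ → A) (n : ℕ) :
    shift^[cutPos H x n] (substSeq H x) = substSeq H (shift^[n] x) := by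
  induction n generalizing x with
  | zero => rfl
  | succ n ih =>
    rw [cutPos_succ', add_comm, Function.iterate_add_apply, shift_iterate_length_substSeq hne, ih,
      Function.iterate_succ_apply]

theorem substSeq_eq_getElem_of_lt (hne : ∀ a, H a ≠ []) (h : P < (H (x 0)).length) :
    substSeq H x P = (H (x 0))[P] := by
  rw [substSeq_eq_catWord hne]
  exact List.getD_eq_getElem _ _ h

theorem prefixWord_substSeq_congr (hne : ∀ a, H a ≠ []) (h : prefixWord x n = prefixWord y n) :
    prefixWord (substSeq H x) (cutPos H x n) = prefixWord (substSeq H y) (cutPos H x n) := by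
  have hcut : cutPos H x n = cutPos H y n := by rw [cutPos, cutPos, h]
  rw [prefixWord_substSeq_cutPos hne, hcut, prefixWord_substSeq_cutPos hne, h]

theorem wordMap_wordMap (G H : A → List A) (w : List A) :
    wordMap G (wordMap H w) = wordMap (fun a => wordMap G (H a)) w :=
  List.flatMap_assoc

theorem substSeq_substSeq {G : A → List A} (hG : ∀ a, G a ≠ []) (hH : ∀ a, H a ≠ [])
    (x : ℕ → A) : substSeq G (substSeq H x) = substSeq (fun a => wordMap G (H a)) x := by
  have hGH : ∀ a, wordMap G (H a) ≠ [] := fun a => wordMap_ne_nil hG (hH a)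
  refine eq_of_forall_prefixWord_eq fun n => ⟨cutPos _ x n, le_cutPos hGH x n, ?_⟩
  have hcut : cutPos (fun a => wordMap G (H a)) x n = cutPos G (substSeq H x) (cutPos H x n) := by
    rw [cutPos, cutPos, prefixWord_substSeq_cutPos hH, wordMap_wordMap]
  rw [prefixWord_substSeq_cutPos hGH, hcut, prefixWord_substSeq_cutPos hG,
    prefixWord_substSeq_cutPos hH, wordMap_wordMap]

theorem wordMap_mem_Lang (hne : ∀ a, H a ≠ []) (hu : IsFixedPointSubst H u) {w : List A}
    (hw : w ∈ Lang u) : wordMap H w ∈ Lang u := by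
  obtain ⟨n, hn⟩ := mem_Lang_iff_isInfix.mp hw
  have h := prefixWord_substSeq_cutPos hne u n
  rw [hu] at h
  exact mem_Lang_iff_isInfix.mpr ⟨cutPos H u n, h ▸ hn.flatMap H⟩

theorem prefixWord_substSeq_mem_Lang (hne : ∀ a, H a ≠ []) (hu : IsFixedPointSubst H u)
    (hx : prefixWord x n ∈ Lang u) (him : i + m ≤ cutPos H x n) :
    prefixWord (shift^[i] (substSeq H x)) m ∈ Lang u :=
  mem_Lang_of_isInfix (prefixWord_shift_isInfix _ him)
    (prefixWord_substSeq_cutPos hne x n ▸ wordMap_mem_Lang hne hu hx)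

end Substitution

/-! ### Powers of a primitive substitution -/

section Powers

variable {H : A → List A} {u : ℕ → A} {m n : ℕ}

/-- The `m`-th power `Hᵐ` of the substitution `H`, as a map on letters. -/
def substPow (H : A → List A) (m : ℕ) (a : A) : List A := (wordMap H)^[m] [a]

theorem substPow_succ (H : A → List A) (m : ℕ) :
    substPow H (m + 1) = fun a => wordMap H (substPow H m a) :=
  funext fun _ => Function.iterate_succ_apply' _ _ _

theorem wordMap_substPow (H : A → List A) (m : ℕ) : wordMap (substPow H m) = (wordMap H)^[m] := by
  induction m with
  | zero => exact funext List.flatMap_singleton'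
  | succ m ih =>
    funext w
    rw [substPow_succ, ← wordMap_wordMap, ih, Function.iterate_succ_apply']

theorem substPow_mul (H : A → List A) (m n : ℕ) :
    substPow H (m * n) = substPow (substPow H m) n := by
  funext a
  rw [substPow, substPow, wordMap_substPow, Function.iterate_mul]

theorem substPow_add (H : A → List A) (m n : ℕ) (a : A) :
    substPow H (m + n) a = wordMap (substPow H m) (substPow H n a) := by
  rw [wordMap_substPow, substPow, substPow, Function.iterate_add_apply]

theorem substPow_ne_nil (hne : ∀ a, H a ≠ []) (m : ℕ) (a : A) : substPow H m a ≠ [] := by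
  induction m with
  | zero => exact List.cons_ne_nil a []
  | succ m ih =>
    rw [substPow_succ]
    exact wordMap_ne_nil hne ih

theorem substSeq_substPow_zero (H : A → List A) (x : ℕ → A) : substSeq (substPow H 0) x = x := by
  have hne : ∀ a, substPow H 0 a ≠ [] := fun a => List.cons_ne_nil a []
  refine eq_of_forall_prefixWord_eq fun n => ⟨_, le_cutPos hne x n, ?_⟩
  rw [prefixWord_substSeq_cutPos hne, cutPos, wordMap_substPow, Function.iterate_zero_apply,
    length_prefixWord]

theorem IsFixedPointSubst.substPow (hne : ∀ a, H a ≠ []) (hu : IsFixedPointSubst H u) (m : ℕ) :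
    IsFixedPointSubst (substPow H m) u := by
  induction m with
  | zero => exact substSeq_substPow_zero H u
  | succ m ih =>
    rw [IsFixedPointSubst, substPow_succ, ← substSeq_substSeq hne (substPow_ne_nil hne m), ih, hu]

theorem mul_length_le_length_wordMap {c : ℕ} (hc : ∀ a, c ≤ (H a).length) (w : List A) :
    w.length * c ≤ (wordMap H w).length := by
  induction w with
  | nil => simp
  | cons a w ih =>
    rw [wordMap_cons, List.length_append, List.length_cons, Nat.succ_mul, add_comm]
    exact add_le_add (hc a) ih

theorem pow_le_length_substPow {c : ℕ} (hc : ∀ a, c ≤ (H a).length) (m : ℕ) (a : A) :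
    c ^ m ≤ (substPow H m a).length := by
  induction m with
  | zero => simp [substPow]
  | succ m ih =>
    rw [substPow_succ, pow_succ]
    exact (Nat.mul_le_mul_right c ih).trans (mul_length_le_length_wordMap hc _)

theorem PrimitiveSubst.exists_le_length_substPow [Nontrivial A] (hprim : PrimitiveSubst H) (n : ℕ) :
    ∃ m, ∀ a, n ≤ (substPow H m a).length := by
  obtain ⟨k, -, hk⟩ := hprim
  obtain ⟨b, c, hbc⟩ := exists_pair_ne A
  have htwo : ∀ a, 2 ≤ (substPow H k a).length := fun a =>
    (List.Nodup.length_le_of_subset (l₁ := [b, c]) (by simpa using hbc)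
      (by simp [substPow, hk]))
  exact ⟨k * n, fun a => n.lt_two_pow_self.le.trans
    (substPow_mul H k n ▸ pow_le_length_substPow htwo n a)⟩

theorem PrimitiveSubst.exists_prefixWord_isInfix_substPow [Nontrivial A] (hne : ∀ a, H a ≠ [])
    (hprim : PrimitiveSubst H) (hu : IsFixedPointSubst H u) (n : ℕ) :
    ∃ m, ∀ a, prefixWord u n <:+: substPow H m a := by
  obtain ⟨m, hm⟩ := hprim.exists_le_length_substPow n
  obtain ⟨k, -, hk⟩ := hprim
  have hpre : prefixWord u n <+: substPow H m (u 0) := by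
    have h := prefixWord_substSeq_length (substPow_ne_nil hne m) u
    rw [hu.substPow hne m] at h
    exact h ▸ prefixWord_isPrefix u (hm (u 0))
  refine ⟨m + k, fun a => ?_⟩
  rw [substPow_add]
  exact hpre.isInfix.trans (List.infix_flatMap_of_mem (hk a (u 0)) _)

theorem exists_prefixWord_isInfix_shift_iterate [Finite A] [Nontrivial A] (hne : ∀ a, H a ≠ [])
    (hprim : PrimitiveSubst H) (hu : IsFixedPointSubst H u) (n : ℕ) :
    ∃ N, ∀ i, prefixWord u n <:+: prefixWord (shift^[i] u) N := by
  obtain ⟨m, hm⟩ := hprim.exists_prefixWord_isInfix_substPow hne hu n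
  obtain ⟨B, hB⟩ := Finite.exists_le fun a => (substPow H m a).length
  refine ⟨B + B, fun i => ?_⟩
  obtain ⟨l, hil, hli⟩ := exists_cutPos_mem_Icc (substPow_ne_nil hne m) hB u i
  obtain ⟨d, hd⟩ := Nat.exists_eq_add_of_le' hil
  have hblock : substPow H m (u l) = prefixWord (shift^[d] (shift^[i] u))
      (substPow H m (u l)).length := by
    have h := prefixWord_substSeq_length (substPow_ne_nil hne m) (shift^[l] u)
    rwa [← shift_iterate_cutPos_substSeq (substPow_ne_nil hne m), hu.substPow hne m, hd,
      Function.iterate_add_apply, shift_iterate_apply, add_zero, eq_comm] at h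
  have := hB (u l)
  exact (hm (u l)).trans (hblock ▸ prefixWord_shift_isInfix _ (by omega))

theorem exists_ne_apply_add [Finite A] [Nontrivial A] (hne : ∀ a, H a ≠ [])
    (hprim : PrimitiveSubst H) (haper : AperiodicSubst H) (hu : IsFixedPointSubst H u) (M : ℕ) :
    ∃ N, ∀ p, 0 < p → p ≤ M → ∀ i, ∃ s < N, u (i + s + p) ≠ u (i + s) := by
  have hone : ∀ p, ∃ N, 0 < p → ∀ i, ∃ s < N, u (i + s + p) ≠ u (i + s) := fun p => by
    by_cases hp : 0 < p
    · obtain ⟨j, hj⟩ : ∃ j, u (j + p) ≠ u j := by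
        by_contra! h
        exact haper u hu ⟨p, hp, h⟩
      obtain ⟨N, hN⟩ := exists_prefixWord_isInfix_shift_iterate hne hprim hu (j + p + 1)
      refine ⟨N, fun _ i => ?_⟩
      obtain ⟨s, hs, heq⟩ := isInfix_prefixWord_iff.mp (hN i)
      rw [length_prefixWord] at hs heq
      have hocc : ∀ l < j + p + 1, u l = u (i + (s + l)) := fun l hl => by
        simpa [shift_iterate_apply] using prefixWord_eq_iff.mp heq l hl
      refine ⟨s + j, by omega, ?_⟩
      rw [add_assoc i, add_assoc s, ← hocc j (by omega), ← hocc (j + p) (by omega)]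
      exact hj
    · exact ⟨0, fun h => absurd h hp⟩
  choose N hN using hone
  refine ⟨(Finset.range (M + 1)).sup N, fun p hp hpM i => ?_⟩
  obtain ⟨s, hs, hne⟩ := hN p hp i
  exact ⟨s, hs.trans_le (Finset.le_sup (Finset.mem_range_succ_iff.mpr hpM)), hne⟩

end Powers

/-! ### Parsing and desubstitution -/

section Parsing

variable {H : A → List A} {x y : ℕ → A} {P Q : ℕ}

/-- The parse of position `P` of `H(x)`: the index `n` of the block `H(xₙ)` that contains it,
together with its offset in that block. -/
def blockPos (H : A → List A) (x : ℕ → A) : ℕ → ℕ × ℕ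
  | 0 => (0, 0)
  | P + 1 =>
    let (n, r) := blockPos H x P
    if r + 1 < (H (x n)).length then (n, r + 1) else (n + 1, 0)

/-- The state of the parse of `H(x)` at position `P`: the letter whose image is being read and the
offset in this image. Two parses in the same state read the same letter. -/
def parseState (H : A → List A) (x : ℕ → A) (P : ℕ) : A × ℕ :=
  (x (blockPos H x P).1, (blockPos H x P).2)

theorem blockPos_succ (H : A → List A) (x : ℕ → A) (P : ℕ) :
    blockPos H x (P + 1) =
      if (blockPos H x P).2 + 1 < (H (x (blockPos H x P).1)).length then
        ((blockPos H x P).1, (blockPos H x P).2 + 1)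
      else ((blockPos H x P).1 + 1, 0) :=
  rfl

theorem blockPos_snd_lt (hne : ∀ a, H a ≠ []) (x : ℕ → A) (P : ℕ) :
    (blockPos H x P).2 < (H (x (blockPos H x P).1)).length := by
  rcases P with _ | P
  · exact List.length_pos_of_ne_nil (hne _)
  · rw [blockPos_succ]
    split_ifs with h
    · exact h
    · exact List.length_pos_of_ne_nil (hne _)

theorem cutPos_blockPos (hne : ∀ a, H a ≠ []) (x : ℕ → A) (P : ℕ) :
    cutPos H x (blockPos H x P).1 + (blockPos H x P).2 = P := by
  induction P with
  | zero => rfl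
  | succ P ih =>
    have hlt := blockPos_snd_lt hne x P
    rw [blockPos_succ]
    split_ifs with h
    · grind
    · grind [cutPos_succ]

theorem getElem?_parseState (hne : ∀ a, H a ≠ []) (x : ℕ → A) (P : ℕ) :
    (H (parseState H x P).1)[(parseState H x P).2]? = some (substSeq H x P) := by
  have hlt := blockPos_snd_lt hne x P
  have h := congrFun (shift_iterate_cutPos_substSeq hne x (blockPos H x P).1) (blockPos H x P).2
  rw [shift_iterate_apply, cutPos_blockPos hne] at h
  rw [h, substSeq_eq_getElem_of_lt hne (by simpa [shift_iterate_apply] using hlt)]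
  simp [parseState, shift_iterate_apply, hlt]

theorem substSeq_eq_of_parseState_eq (hne : ∀ a, H a ≠ [])
    (h : parseState H x P = parseState H y Q) : substSeq H x P = substSeq H y Q :=
  Option.some_injective _ <| by rw [← getElem?_parseState hne, ← getElem?_parseState hne, h]

theorem parseState_succ_of_snd_ne_zero (h : parseState H x P = parseState H y Q)
    (h0 : (parseState H x (P + 1)).2 ≠ 0) :
    parseState H x (P + 1) = parseState H y (Q + 1) := by
  grind [parseState, blockPos_succ]

theorem parseState_succ_of_substSeq_eq {hne : ∀ a, H a ≠ []} (hm : MarkedSubst H hne)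
    (h : parseState H x P = parseState H y Q)
    (hletter : substSeq H x (P + 1) = substSeq H y (Q + 1)) :
    parseState H x (P + 1) = parseState H y (Q + 1) := by
  by_cases hx : (parseState H x (P + 1)).2 = 0
  · have hy : (parseState H y (Q + 1)).2 = 0 := by
      by_contra hy
      exact hy (parseState_succ_of_snd_ne_zero h.symm hy ▸ hx)
    have hhead := getElem?_parseState hne x (P + 1)
    rw [hletter, ← getElem?_parseState hne y (Q + 1), hx, hy, ← List.head?_eq_getElem?,
      ← List.head?_eq_getElem?, List.head?_eq_some_head (hne _),
      List.head?_eq_some_head (hne _)] at hhead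
    exact Prod.ext (hm.1 (Option.some_injective _ hhead)) (hx.trans hy.symm)
  · exact parseState_succ_of_snd_ne_zero h hx

/-- Two parses of the same word that never cut at the same place form a deterministic automaton:
at each step one of the two parses stays inside its block, so it knows the next letter, and by
markedness this letter tells the other parse which block it enters. -/
theorem parseState_succ_of_no_common_cut {hne : ∀ a, H a ≠ []} (hm : MarkedSubst H hne)
    {i q s t T : ℕ} (hxy : ∀ s ≤ T, substSeq H x (i + s) = substSeq H y (q + s))
    (hcut : ∀ s ≤ T, (parseState H x (i + s)).2 ≠ 0 ∨ (parseState H y (q + s)).2 ≠ 0)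
    (hs : s < T) (ht : t < T)
    (hx : parseState H x (i + s) = parseState H x (i + t))
    (hy : parseState H y (q + s) = parseState H y (q + t)) :
    parseState H x (i + (s + 1)) = parseState H x (i + (t + 1)) ∧
      parseState H y (q + (s + 1)) = parseState H y (q + (t + 1)) := by
  rcases hcut (s + 1) hs with h | h
  · have hx' := parseState_succ_of_snd_ne_zero hx h
    refine ⟨hx', parseState_succ_of_substSeq_eq hm hy ?_⟩
    have hletter := substSeq_eq_of_parseState_eq hne hx'
    rwa [add_assoc, add_assoc, hxy _ hs, hxy _ ht] at hletter
  · have hy' := parseState_succ_of_snd_ne_zero hy h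
    refine ⟨parseState_succ_of_substSeq_eq hm hx ?_, hy'⟩
    have hletter := substSeq_eq_of_parseState_eq hne hy'
    rwa [add_assoc, add_assoc, ← hxy _ hs, ← hxy _ ht] at hletter

theorem exists_period_of_deterministic {α : Type*} {σ : ℕ → α} {S : Finset α} {T : ℕ}
    (hS : ∀ s ≤ S.card, σ s ∈ S)
    (hσ : ∀ s < T, ∀ t < T, σ s = σ t → σ (s + 1) = σ (t + 1)) :
    ∃ p, 0 < p ∧ p ≤ S.card ∧ ∀ s, S.card ≤ s → s + p ≤ T → σ (s + p) = σ s := by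
  obtain ⟨a, ha, b, hb, hab, heq⟩ :=
    Finset.exists_ne_map_eq_of_card_lt_of_maps_to (s := Finset.range (S.card + 1)) (t := S) (f := σ)
      (by simp) fun s hs => hS s (Finset.mem_range_succ_iff.mp hs)
  wlog hlt : a < b generalizing a b
  · exact this b hb a ha hab.symm heq.symm (by omega)
  obtain ⟨p, rfl⟩ := Nat.exists_eq_add_of_lt hlt
  have hb' := Finset.mem_range_succ_iff.mp hb
  have hper : ∀ s ≥ a, s + (p + 1) ≤ T → σ (s + (p + 1)) = σ s := fun s hs => by
    induction s, hs using Nat.le_induction with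
    | base => exact fun _ => heq.symm
    | succ s _ ih =>
      intro hT
      rw [Nat.add_right_comm]
      exact hσ _ (by omega) _ (by omega) (ih (by omega))
  exact ⟨p + 1, p.succ_pos, by omega, fun s hs => hper s (by omega)⟩

theorem exists_common_cut [Finite A] {hne : ∀ a, H a ≠ []} (hm : MarkedSubst H hne)
    (hy : ∀ M, ∃ N, ∀ p, 0 < p → p ≤ M → ∀ i, ∃ s < N,
      substSeq H y (i + s + p) ≠ substSeq H y (i + s)) :
    ∃ T, ∀ x i q, (∀ s ≤ T, substSeq H x (i + s) = substSeq H y (q + s)) →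
      ∃ t a b, t ≤ T ∧ i + t = cutPos H x a ∧ q + t = cutPos H y b := by
  have := Fintype.ofFinite A
  obtain ⟨B, hB⟩ := Finite.exists_le fun a => (H a).length
  let S : Finset (A × ℕ) := Finset.univ ×ˢ Finset.range B
  have hS : ∀ z P, parseState H z P ∈ S := fun z P => by
    simpa [S, parseState] using (blockPos_snd_lt hne z P).trans_le (hB _)
  obtain ⟨N, hN⟩ := hy (S ×ˢ S).card
  set M := (S ×ˢ S).card
  refine ⟨M + N + M, fun x i q hxy => ?_⟩
  by_contra! hcut
  have hzero : ∀ s ≤ M + N + M,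
      (parseState H x (i + s)).2 ≠ 0 ∨ (parseState H y (q + s)).2 ≠ 0 := fun s hsT => by
    by_contra! h0
    have hx0 := cutPos_blockPos hne x (i + s)
    have hy0 := cutPos_blockPos hne y (q + s)
    rw [show (blockPos H x (i + s)).2 = 0 from h0.1, add_zero] at hx0
    rw [show (blockPos H y (q + s)).2 = 0 from h0.2, add_zero] at hy0
    exact hcut s _ _ hsT hx0.symm hy0.symm
  obtain ⟨p, hp, hpM, hper⟩ := exists_period_of_deterministic (S := S ×ˢ S) (T := M + N + M)
    (σ := fun s => (parseState H x (i + s), parseState H y (q + s)))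
    (fun s _ => Finset.mk_mem_product (hS _ _) (hS _ _))
    (fun s hs t ht hst => Prod.ext_iff.mpr (parseState_succ_of_no_common_cut hm hxy hzero hs ht
      (Prod.ext_iff.mp hst).1 (Prod.ext_iff.mp hst).2))
  obtain ⟨s, hs, hsp⟩ := hN p hp hpM (q + M)
  have hstate := (Prod.ext_iff.mp (hper (M + s) (by omega) (by omega))).2
  exact hsp (by simpa [add_assoc] using substSeq_eq_of_parseState_eq hne hstate)

end Parsing

section Desubstitution

variable {H : A → List A} {x y u : ℕ → A}

theorem exists_eq_cons_of_wordMap_isPrefix {hne : ∀ a, H a ≠ []}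
    (hinj : Function.Injective fun a => (H a).head (hne a)) {w z p : List A} {a : A} (hp : p ≠ [])
    (hw : p <+: wordMap H (a :: w)) (hz : p <+: wordMap H z) : ∃ z', z = a :: z' := by
  cases z with
  | nil => exact absurd (List.prefix_nil.mp hz) hp
  | cons b z =>
    rw [wordMap_cons] at hw hz
    have h := (hw.head hp).symm.trans (hz.head hp)
    rw [List.head_append_of_ne_nil (hne a), List.head_append_of_ne_nil (hne b)] at h
    exact ⟨z, by rw [hinj h]⟩

theorem isPrefix_of_wordMap_isPrefix {hne : ∀ a, H a ≠ []}
    (hinj : Function.Injective fun a => (H a).head (hne a)) {w z p : List A} {a : A}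
    (hlen : (wordMap H w).length < p.length) (hw : p <+: wordMap H (w ++ [a]))
    (hz : p <+: wordMap H z) : w ++ [a] <+: z := by
  have hp : p ≠ [] := List.ne_nil_of_length_pos (Nat.zero_lt_of_lt hlen)
  induction w generalizing z p with
  | nil =>
    obtain ⟨z, rfl⟩ := exists_eq_cons_of_wordMap_isPrefix hinj hp hw hz
    simp
  | cons c w ih =>
    obtain ⟨z, rfl⟩ := exists_eq_cons_of_wordMap_isPrefix hinj hp hw hz
    rw [List.cons_append, wordMap_cons] at hw
    rw [wordMap_cons] at hz hlen
    rw [List.length_append] at hlen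
    obtain ⟨p, rfl⟩ := List.prefix_of_prefix_length_le (List.prefix_append (H c) _) hw (by omega)
    rw [List.prefix_append_right_inj] at hw hz
    rw [List.length_append] at hlen
    exact List.cons_prefix_cons.mpr ⟨rfl, ih (by omega) hw hz
      (List.ne_nil_of_length_pos (by omega))⟩

theorem isSuffix_of_wordMap_isSuffix {hne : ∀ a, H a ≠ []}
    (hinj : Function.Injective fun a => (H a).getLast (hne a)) {w z p : List A} {a : A}
    (hlen : (wordMap H w).length < p.length) (hw : p <:+ wordMap H (a :: w))
    (hz : p <:+ wordMap H z) : a :: w <:+ z := by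
  have hrev : ∀ v, (wordMap H v).reverse = wordMap (List.reverse ∘ H) v.reverse := fun v =>
    List.reverse_flatMap
  rw [← List.reverse_prefix, hrev] at hw hz
  rw [← List.reverse_prefix, List.reverse_cons]
  rw [List.reverse_cons] at hw
  refine isPrefix_of_wordMap_isPrefix (H := List.reverse ∘ H) (p := p.reverse)
    (hne := fun b => by simpa using hne b) (by simpa using hinj) ?_ hw hz
  rwa [← hrev, List.length_reverse, List.length_reverse]

theorem prefixWord_eq_of_substSeq_eq {hne : ∀ a, H a ≠ []}
    (hinj : Function.Injective fun a => (H a).head (hne a)) {n : ℕ}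
    (hxy : prefixWord (substSeq H x) (cutPos H x n + 1) =
      prefixWord (substSeq H y) (cutPos H x n + 1)) :
    prefixWord x (n + 1) = prefixWord y (n + 1) := by
  have hpre : prefixWord x (n + 1) <+: prefixWord y (cutPos H x n + 1) := by
    rw [prefixWord_succ]
    refine isPrefix_of_wordMap_isPrefix hinj
      (p := prefixWord (substSeq H x) (cutPos H x n + 1)) ?_ ?_ ?_
    · rw [length_prefixWord]
      exact Nat.lt_succ_self _
    · rw [← prefixWord_succ, ← prefixWord_substSeq_cutPos hne]
      exact prefixWord_isPrefix _ (cutPos_strictMono hne x n.lt_succ_self)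
    · rw [hxy, ← prefixWord_substSeq_cutPos hne]
      exact prefixWord_isPrefix _ (le_cutPos hne _ _)
  exact (List.prefix_of_prefix_length_le hpre
    (prefixWord_isPrefix y (Nat.succ_le_succ (le_cutPos hne x n)))
    (by simp [length_prefixWord])).eq_of_length (by simp [length_prefixWord])

theorem prefixWord_isSuffix_of_substSeq_eq {hne : ∀ a, H a ≠ []}
    (hinj : Function.Injective fun a => (H a).getLast (hne a)) {i q t a b : ℕ}
    (hi : i < (H (x 0)).length)
    (hxy : prefixWord (shift^[i] (substSeq H x)) t = prefixWord (shift^[q] (substSeq H y)) t)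
    (ha : i + t = cutPos H x a) (hb : q + t = cutPos H y b) :
    prefixWord x a <:+ prefixWord y b := by
  rcases a with _ | a
  · exact List.nil_suffix
  rw [prefixWord_succ']
  refine isSuffix_of_wordMap_isSuffix hinj (p := prefixWord (shift^[i] (substSeq H x)) t) ?_ ?_ ?_
  · rw [cutPos_succ', cutPos] at ha
    rw [length_prefixWord]
    omega
  · rw [← prefixWord_succ', ← prefixWord_substSeq_cutPos hne, ← ha]
    exact prefixWord_shift_isSuffix _ _ _
  · rw [hxy, ← prefixWord_substSeq_cutPos hne, ← hb]
    exact prefixWord_shift_isSuffix _ _ _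

theorem prefixWord_mem_Lang_of_common_cut {hne : ∀ a, H a ≠ []} (hm : MarkedSubst H hne)
    {n i q t a b : ℕ} (hi : i < (H (x 0)).length) (htn : i + t ≤ cutPos H x n)
    (hxy : prefixWord (shift^[i] (substSeq H x)) (cutPos H x n - i + 1) =
      prefixWord (shift^[q] (substSeq H y)) (cutPos H x n - i + 1))
    (ha : i + t = cutPos H x a) (hb : q + t = cutPos H y b) :
    prefixWord x (n + 1) ∈ Lang y := by
  obtain ⟨c, rfl⟩ :=
    Nat.exists_eq_add_of_le ((cutPos_strictMono hne x).le_iff_le.mp (ha.symm.trans_le htn))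
  have hlen : cutPos H x (a + c) - i + 1 = t + (cutPos H (shift^[a] x) c + 1) := by
    rw [cutPos_add, ← ha]
    omega
  rw [hlen, prefixWord_add _ t, prefixWord_add _ t, ← Function.iterate_add_apply,
    ← Function.iterate_add_apply, add_comm t, add_comm t, ha, hb,
    shift_iterate_cutPos_substSeq hne, shift_iterate_cutPos_substSeq hne] at hxy
  obtain ⟨hbefore, hafter⟩ := List.append_inj hxy (by simp [length_prefixWord])
  obtain ⟨z, hz⟩ := prefixWord_isSuffix_of_substSeq_eq hm.2 hi hbefore ha hb
  refine mem_Lang_iff_isInfix.mpr ⟨b + (c + 1), z, [], ?_⟩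
  rw [add_assoc, prefixWord_add x, prefixWord_add y, prefixWord_eq_of_substSeq_eq hm.1 hafter, ← hz,
    List.append_nil, List.append_assoc]

/-- `N` is a desubstitution bound for `H`: if `n ≥ N` and the factor of `H(x)` that starts inside
`H(x₀)` and ends with the first letter of `H(xₙ)` is legal, then `x₀ ⋯ xₙ` is legal. -/
def IsDesubstBound (H : A → List A) (u : ℕ → A) (N : ℕ) : Prop :=
  ∀ x n i, N ≤ n → i < (H (x 0)).length →
    prefixWord (shift^[i] (substSeq H x)) (cutPos H x n - i + 1) ∈ Lang u →
    prefixWord x (n + 1) ∈ Lang u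

theorem exists_isDesubstBound [Finite A] [Nontrivial A] {hne : ∀ a, H a ≠ []}
    (hprim : PrimitiveSubst H) (haper : AperiodicSubst H) (hm : MarkedSubst H hne)
    (hu : IsFixedPointSubst H u) : ∃ N, IsDesubstBound H u N := by
  have hper := exists_ne_apply_add hne hprim haper hu
  rw [← hu] at hper
  obtain ⟨N, hN⟩ := exists_common_cut hm hper
  refine ⟨N + 1, fun x n i hn hi hx => ?_⟩
  obtain ⟨q, hq⟩ := prefixWord_mem_Lang_iff.mp hx
  have hlen : i + N ≤ cutPos H x n := by
    obtain ⟨n, rfl⟩ := Nat.exists_eq_add_of_le' hn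
    have := le_cutPos hne (shift x) (n + N)
    rw [← add_assoc, cutPos_succ']
    omega
  obtain ⟨t, a, b, htN, ha, hb⟩ := hN x i q fun s hs => by
    have := prefixWord_eq_iff.mp hq s (by omega)
    rwa [shift_iterate_apply, shift_iterate_apply, ← congrFun hu] at this
  exact prefixWord_mem_Lang_of_common_cut hm hi (by omega) (hu.symm ▸ hq) ha hb

end Desubstitution

/-! ### Renormalization -/

section Renormalization

variable {G H : A → List A} {V W : (ℕ → A) → ℝ} {u : ℕ → A}

theorem renorm_eq_birkhoffSum (H : A → List A) (V : (ℕ → A) → ℝ) (x : ℕ → A) :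
    renorm H V x = birkhoffSum shift V (H (x 0)).length (substSeq H x) :=
  rfl

theorem birkhoffSum_substSeq (hne : ∀ a, H a ≠ []) (V : (ℕ → A) → ℝ) (x : ℕ → A) (n : ℕ) :
    birkhoffSum shift V (cutPos H x n) (substSeq H x) = birkhoffSum shift (renorm H V) n x := by
  induction n with
  | zero => rfl
  | succ n ih =>
    rw [cutPos_succ, birkhoffSum_add, ih, shift_iterate_cutPos_substSeq hne, birkhoffSum_succ,
      renorm_eq_birkhoffSum, shift_iterate_apply, add_zero]

theorem renorm_renorm (hG : ∀ a, G a ≠ []) (hH : ∀ a, H a ≠ []) (V : (ℕ → A) → ℝ) :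
    renorm H (renorm G V) = renorm (fun a => wordMap G (H a)) V := by
  funext x
  rw [renorm_eq_birkhoffSum, renorm_eq_birkhoffSum, ← birkhoffSum_substSeq hG,
    substSeq_substSeq hG hH, cutPos, prefixWord_substSeq_length hH]

theorem iterate_renorm (hne : ∀ a, H a ≠ []) (m : ℕ) (V : (ℕ → A) → ℝ) :
    (renorm H)^[m] V = renorm (substPow H m) V := by
  induction m generalizing V with
  | zero =>
    funext x
    simp [renorm, substPow, substSeq_substPow_zero]
  | succ m ih =>
    rw [Function.iterate_succ_apply, ih, renorm_renorm hne (substPow_ne_nil hne m), substPow_succ]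

theorem renorm_congr_of_twoFull {L : ℕ} (hne : ∀ a, G a ≠ []) (hu : IsFixedPointSubst G u)
    (h2 : TwoFull G u) (hL : ∀ a, L ≤ (G a).length)
    (hVW : ∀ y, prefixWord y L ∈ Lang u → V y = W y) : renorm G V = renorm G W := by
  funext x
  refine Finset.sum_congr rfl fun i hi => hVW _ ?_
  refine prefixWord_substSeq_mem_Lang hne hu (h2 _ (length_prefixWord x 2)) ?_
  rw [cutPos_succ, cutPos_one]
  exact add_le_add (Finset.mem_range.mp hi).le (hL _)

end Renormalization

/-! ### Perron–Frobenius weights of words -/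

section Weights

variable {H : A → List A} {v : A → ℝ} {lam : ℝ} {n : ℕ}

theorem sum_map_eq_sum_count_mul [Fintype A] [DecidableEq A] (w : List A) (v : A → ℝ) :
    (w.map v).sum = ∑ b, (w.count b : ℝ) * v b := by
  rw [Finset.sum_list_map_count]
  simp only [nsmul_eq_mul]
  exact Finset.sum_subset (Finset.subset_univ _) fun b _ hb => by
    simp [List.count_eq_zero_of_not_mem (mt List.mem_toFinset.mpr hb)]

theorem incMat_pow_apply [Fintype A] [DecidableEq A] (H : A → List A) (k : ℕ) (a b : A) :
    (incMat H ^ k) a b = ((substPow H k a).count b : ℝ) := by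
  induction k generalizing b with
  | zero => simp [substPow, Matrix.one_apply, List.count_singleton]
  | succ k ih =>
    simp only [pow_succ, Matrix.mul_apply, ih, substPow_succ, wordMap, List.count_flatMap,
      Nat.cast_list_sum, List.map_map, sum_map_eq_sum_count_mul]
    rfl

theorem PrimitiveSubst.isPrimitive_incMat [Fintype A] [DecidableEq A] (hprim : PrimitiveSubst H) :
    (incMat H).IsPrimitive := by
  obtain ⟨k, hk0, hk⟩ := hprim
  refine ⟨fun a b => Nat.cast_nonneg _, k, hk0, fun a b => ?_⟩
  rw [incMat_pow_apply]
  exact Nat.cast_pos.mpr (List.count_pos_iff.mpr (hk a b))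

theorem incMat_mulVec [Fintype A] [DecidableEq A] (H : A → List A) (v : A → ℝ) (a : A) :
    (incMat H).mulVec v a = ((H a).map v).sum :=
  (sum_map_eq_sum_count_mul (H a) v).symm

/-- `v` is a system of positive letter weights such that `H` multiplies the total weight of a word
by `lam`, that is, a Perron–Frobenius eigenvector of the incidence matrix. -/
structure IsPerronWeight (H : A → List A) (lam : ℝ) (v : A → ℝ) : Prop where
  pos : ∀ a, 0 < v a
  sum_map : ∀ a, ((H a).map v).sum = lam * v a

theorem PrimitiveSubst.exists_isPerronWeight [Finite A] [Nonempty A] (hprim : PrimitiveSubst H) :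
    ∃ lam v, IsPerronWeight H lam v := by
  classical
  have := Fintype.ofFinite A
  obtain ⟨lam, v, hv, heig⟩ := exists_pos_eigenvector_of_isPrimitive hprim.isPrimitive_incMat
  exact ⟨lam, v, hv, fun a => by rw [← incMat_mulVec, heig, Pi.smul_apply, smul_eq_mul]⟩

theorem IsPerronWeight.lam_ne_zero [Nonempty A] (hne : ∀ a, H a ≠ [])
    (hv : IsPerronWeight H lam v) : lam ≠ 0 := by
  obtain ⟨a⟩ := ‹Nonempty A›
  rintro rfl
  have hpos : 0 < ((H a).map v).sum := List.sum_pos _ (by simp [hv.pos]) (by simp [hne])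
  rw [hv.sum_map, zero_mul] at hpos
  exact hpos.false

theorem IsPerronWeight.sum_map_wordMap (hv : IsPerronWeight H lam v) (w : List A) :
    ((wordMap H w).map v).sum = lam * (w.map v).sum := by
  induction w with
  | nil => simp [wordMap]
  | cons a w ih => simp [wordMap_cons, hv.sum_map, ih, mul_add]

/-- The total weight of the first `n` letters of `x`. -/
def prefixWeight (v : A → ℝ) (x : ℕ → A) (n : ℕ) : ℝ := ((prefixWord x n).map v).sum

theorem prefixWeight_succ (v : A → ℝ) (x : ℕ → A) (n : ℕ) :
    prefixWeight v x (n + 1) = prefixWeight v x n + v (x n) := by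
  simp [prefixWeight, prefixWord_succ]

theorem prefixWeight_succ' (v : A → ℝ) (x : ℕ → A) (n : ℕ) :
    prefixWeight v x (n + 1) = v (x 0) + prefixWeight v (shift x) n := by
  simp [prefixWeight, prefixWord_succ']

theorem prefixWeight_add (v : A → ℝ) (x : ℕ → A) (m n : ℕ) :
    prefixWeight v x (m + n) = prefixWeight v x m + prefixWeight v (shift^[m] x) n := by
  simp [prefixWeight, prefixWord_add]

theorem mul_le_prefixWeight {c : ℝ} (hc : ∀ a, c ≤ v a) (x : ℕ → A) (n : ℕ) :
    n * c ≤ prefixWeight v x n := by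
  simpa [prefixWeight, length_prefixWord] using
    List.card_nsmul_le_sum ((prefixWord x n).map v) c (by simp [hc])

theorem prefixWeight_pos (hv : ∀ a, 0 < v a) (x : ℕ → A) (hn : 0 < n) :
    0 < prefixWeight v x n :=
  List.sum_pos _ (by simp [hv]) (by simp [prefixWord, hn.ne'])

theorem IsPerronWeight.prefixWeight_substSeq_cutPos (hne : ∀ a, H a ≠ [])
    (hv : IsPerronWeight H lam v) (x : ℕ → A) (n : ℕ) :
    prefixWeight v (substSeq H x) (cutPos H x n) = lam * prefixWeight v x n := by
  rw [prefixWeight, prefixWord_substSeq_cutPos hne, hv.sum_map_wordMap, prefixWeight]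

end Weights

/-! ### The logarithmic potential -/

section BasePotential

variable {H : A → List A} {v : A → ℝ} {lam c d : ℝ} {x u : ℕ → A} {n N : ℕ}

open Classical in
/-- The logarithmic potential `log S - log (S - v (x₀))`, where `S` is the weight of the longest
legal prefix of `x`; it is `0` if all prefixes of `x` are legal. -/
noncomputable def basePotential (v : A → ℝ) (u x : ℕ → A) : ℝ :=
  if ∀ n, prefixWord x n ∈ Lang u then 0
  else Real.log (prefixWeight v x (delta u x)) -
    Real.log (prefixWeight v x (delta u x) - v (x 0))

theorem basePotential_eq_zero (h : ∀ n, prefixWord x n ∈ Lang u) : basePotential v u x = 0 :=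
  if_pos h

theorem basePotential_eq (h : prefixWord x n ∈ Lang u) (h' : prefixWord x (n + 1) ∉ Lang u) :
    basePotential v u x =
      Real.log (prefixWeight v x n) - Real.log (prefixWeight v x n - v (x 0)) := by
  rw [basePotential, if_neg fun hall => h' (hall _), delta_eq h h']

theorem basePotential_eq_log_add (h : prefixWord x (n + 1) ∈ Lang u)
    (h' : prefixWord x (n + 2) ∉ Lang u) :
    basePotential v u x =
      Real.log (v (x 0) + prefixWeight v (shift x) n) - Real.log (prefixWeight v (shift x) n) := by
  rw [basePotential_eq h h', prefixWeight_succ', add_sub_cancel_left]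

theorem basePotential_pos (hv : ∀ a, 0 < v a) (h : prefixWord x 2 ∈ Lang u)
    (hx : ∃ n, prefixWord x n ∉ Lang u) : 0 < basePotential v u x := by
  obtain ⟨n, hn, hlegal, hillegal⟩ := exists_maximal_prefixWord_mem_Lang h hx
  obtain ⟨k, rfl⟩ := Nat.exists_eq_add_of_le' hn
  rw [basePotential_eq_log_add hlegal hillegal, sub_pos]
  exact Real.log_lt_log (prefixWeight_pos hv _ k.succ_pos) (lt_add_of_pos_left _ (hv _))

theorem basePotential_nonneg (hv : ∀ a, 0 < v a) (h : prefixWord x 2 ∈ Lang u) :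
    0 ≤ basePotential v u x :=
  (em (∀ n, prefixWord x n ∈ Lang u)).elim (fun hx => (basePotential_eq_zero hx).ge) fun hx =>
    (basePotential_pos hv h (not_forall.mp hx)).le

theorem basePotential_le (hc : 0 < c) (hcv : ∀ a, c ≤ v a) (hvd : ∀ a, v a ≤ d)
    (h : prefixWord x (n + 2) ∈ Lang u) : basePotential v u x ≤ d / ((n + 1) * c) := by
  have hd : 0 < d := hc.trans_le ((hcv (x 0)).trans (hvd (x 0)))
  by_cases hx : ∀ k, prefixWord x k ∈ Lang u
  · rw [basePotential_eq_zero hx]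
    positivity
  obtain ⟨m, hm, hlegal, hillegal⟩ := exists_maximal_prefixWord_mem_Lang h (not_forall.mp hx)
  obtain ⟨k, rfl⟩ := Nat.exists_eq_add_of_le' (le_trans (Nat.le_add_left 1 (n + 1)) hm)
  set T := prefixWeight v (shift x) k
  have hT : (n + 1) * c ≤ T := by
    have hnk : (n : ℝ) + 1 ≤ k := by exact_mod_cast Nat.succ_le_succ_iff.mp hm
    exact (mul_le_mul_of_nonneg_right hnk hc.le).trans (mul_le_prefixWeight hcv _ k)
  have hTpos : 0 < T := lt_of_lt_of_le (by positivity) hT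
  have hvx : 0 < v (x 0) := hc.trans_le (hcv (x 0))
  calc basePotential v u x = Real.log ((v (x 0) + T) / T) := by
        rw [basePotential_eq_log_add hlegal hillegal, Real.log_div (by positivity) hTpos.ne']
    _ ≤ (v (x 0) + T) / T - 1 := Real.log_le_sub_one_of_pos (by positivity)
    _ = v (x 0) / T := by rw [add_div, div_self hTpos.ne', add_sub_cancel_right]
    _ ≤ d / ((n + 1) * c) := div_le_div₀ hd.le (hvd _) (by positivity) hT

/-- The tails of `x` share their longest legal prefix with `x`, so the sum telescopes. -/
theorem birkhoffSum_basePotential {p : ℕ} (hp : p ≤ n)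
    (h : ∀ i < p, prefixWord (shift^[i] x) (n - i) ∈ Lang u)
    (h' : ∀ i < p, prefixWord (shift^[i] x) (n - i + 1) ∉ Lang u) :
    birkhoffSum shift (basePotential v u) p x =
      Real.log (prefixWeight v x n) - Real.log (prefixWeight v x n - prefixWeight v x p) := by
  have hterm : ∀ i ∈ Finset.range p, basePotential v u (shift^[i] x) =
      Real.log (prefixWeight v x n - prefixWeight v x i) -
        Real.log (prefixWeight v x n - prefixWeight v x (i + 1)) := fun i hi => by
    have hip := Finset.mem_range.mp hi
    have hn : prefixWeight v x n = prefixWeight v x i + prefixWeight v (shift^[i] x) (n - i) := by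
      rw [← prefixWeight_add, Nat.add_sub_cancel' (hip.le.trans hp)]
    rw [basePotential_eq (h i hip) (h' i hip), prefixWeight_succ, hn, shift_iterate_apply,
      add_zero, add_sub_cancel_left, add_sub_add_left_eq_sub]
  rw [birkhoffSum, Finset.sum_congr rfl hterm, Finset.sum_range_sub']
  simp [prefixWeight, prefixWord]

theorem renorm_basePotential (hne : ∀ a, H a ≠ []) (hu : IsFixedPointSubst H u)
    (hv : IsPerronWeight H lam v)
    (hN : IsDesubstBound H u N) (hx : prefixWord x (N + 2) ∈ Lang u) :
    renorm H (basePotential v u) x = basePotential v u x := by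
  have : Nonempty A := ⟨x 0⟩
  by_cases hall : ∀ n, prefixWord x n ∈ Lang u
  · rw [basePotential_eq_zero hall]
    refine Finset.sum_eq_zero fun i _ => basePotential_eq_zero fun m => ?_
    exact prefixWord_substSeq_mem_Lang hne hu (hall (i + m)) (le_cutPos hne x _)
  obtain ⟨n, hn, h, h'⟩ := exists_maximal_prefixWord_mem_Lang hx (not_forall.mp hall)
  have hblock : (H (x 0)).length < cutPos H x n :=
    cutPos_one H x ▸ cutPos_strictMono hne x (by omega)
  have hblockWeight : prefixWeight v (substSeq H x) (H (x 0)).length = lam * v (x 0) := by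
    rw [prefixWeight, prefixWord_substSeq_length hne, hv.sum_map]
  have hS : 0 < prefixWeight v x n := prefixWeight_pos hv.pos x (by omega)
  have hT : 0 < prefixWeight v x n - v (x 0) := by
    obtain ⟨k, rfl⟩ := Nat.exists_eq_add_of_le' (le_trans (Nat.le_add_left 2 N) hn)
    rw [prefixWeight_succ', add_sub_cancel_left]
    exact prefixWeight_pos hv.pos _ k.succ_pos
  rw [renorm_eq_birkhoffSum, birkhoffSum_basePotential hblock.le
      (fun i hi => prefixWord_substSeq_mem_Lang hne hu h (by omega))
      (fun i hi hlegal => h' (hN x n i (by omega) hi hlegal)),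
    hblockWeight, hv.prefixWeight_substSeq_cutPos hne, ← mul_sub,
    Real.log_mul (hv.lam_ne_zero hne) hS.ne', Real.log_mul (hv.lam_ne_zero hne) hT.ne',
    add_sub_add_left_eq_sub, basePotential_eq h h']

end BasePotential

/-! ### Topology -/

section Topology

variable [TopologicalSpace A]
variable {H : A → List A} {V : (ℕ → A) → ℝ} {v : A → ℝ} {u x : ℕ → A} {N : ℕ}

theorem continuous_shift : Continuous (shift : (ℕ → A) → ℕ → A) :=
  continuous_pi fun n => continuous_apply (n + 1)

variable [DiscreteTopology A]

theorem hasBasis_nhds_prefixWord (x : ℕ → A) :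
    (𝓝 x).HasBasis (fun _ : ℕ => True) fun n => {y | prefixWord y n = prefixWord x n} := by
  refine (PiNat.isTopologicalBasis_cylinders fun _ : ℕ => A).nhds_hasBasis.to_hasBasis ?_ ?_
  · rintro _ ⟨⟨y, n, rfl⟩, hx⟩
    refine ⟨n, trivial, fun z hz j hj => ?_⟩
    rw [prefixWord_eq_iff.mp hz j hj, hx j hj]
  · exact fun n _ => ⟨PiNat.cylinder x n, ⟨⟨x, n, rfl⟩, PiNat.self_mem_cylinder x n⟩,
      fun z hz => prefixWord_eq_iff.mpr hz⟩

theorem eventually_prefixWord_eq (x : ℕ → A) (n : ℕ) :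
    ∀ᶠ y in 𝓝 x, prefixWord y n = prefixWord x n :=
  (hasBasis_nhds_prefixWord x).mem_of_mem trivial

theorem mem_orbitClosure_iff : x ∈ orbitClosure u ↔ ∀ n, prefixWord x n ∈ Lang u := by
  simp only [orbitClosure, mem_closure_iff_nhds_basis (hasBasis_nhds_prefixWord x),
    prefixWord_mem_Lang_iff, true_implies]
  refine forall_congr' fun n => ⟨?_, ?_⟩
  · rintro ⟨_, ⟨k, rfl⟩, hk⟩
    exact ⟨k, hk.symm⟩
  · rintro ⟨k, hk⟩
    exact ⟨_, ⟨k, rfl⟩, hk.symm⟩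

theorem continuous_substSeq (hne : ∀ a, H a ≠ []) : Continuous (substSeq H) := by
  refine continuous_iff_continuousAt.mpr fun x =>
    (hasBasis_nhds_prefixWord _).tendsto_right_iff.mpr fun n _ => ?_
  filter_upwards [eventually_prefixWord_eq x n] with y hy
  have h := prefixWord_eq_iff.mp (prefixWord_substSeq_congr hne hy.symm)
  exact (prefixWord_eq_iff.mpr fun j hj => h j (hj.trans_le (le_cutPos hne x n))).symm

theorem continuous_renorm (hne : ∀ a, H a ≠ []) (hV : Continuous V) : Continuous (renorm H V) := by
  refine continuous_iff_continuousAt.mpr fun x => ?_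
  have hcont : Continuous fun y => birkhoffSum shift V (H (x 0)).length (substSeq H y) :=
    continuous_finsetSum _ fun i _ =>
      hV.comp ((continuous_shift.iterate i).comp (continuous_substSeq hne))
  refine hcont.continuousAt.congr ?_
  filter_upwards [eventually_prefixWord_eq x 1] with y hy
  rw [renorm_eq_birkhoffSum, prefixWord_eq_iff.mp hy 0 one_pos]

theorem continuous_basePotential [Finite A] (hv : ∀ a, 0 < v a) :
    Continuous (basePotential v u) := by
  refine continuous_iff_continuousAt.mpr fun x => ?_
  by_cases hx : ∀ n, prefixWord x n ∈ Lang u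
  · have : Nonempty A := ⟨x 0⟩
    obtain ⟨a, ha⟩ := Finite.exists_min v
    obtain ⟨d, hd⟩ := Finite.exists_le v
    refine ((hasBasis_nhds_prefixWord x).tendsto_iff Metric.nhds_basis_ball).mpr fun ε hε => ?_
    obtain ⟨n, hn⟩ := exists_nat_gt (d / (ε * v a))
    refine ⟨n + 2, trivial, fun y hy => ?_⟩
    have hy : prefixWord y (n + 2) ∈ Lang u := (show prefixWord y (n + 2) = _ from hy) ▸ hx _
    have hva := hv a
    rw [div_lt_iff₀ (by positivity)] at hn
    have hlt : d / ((n + 1) * v a) < ε := by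
      rw [div_lt_iff₀ (by positivity)]
      nlinarith [mul_pos hε hva]
    rw [basePotential_eq_zero hx, Metric.mem_ball, Real.dist_0_eq_abs,
      abs_of_nonneg (basePotential_nonneg hv (prefixWord_mem_Lang_mono (by omega) hy))]
    exact (basePotential_le hva ha hd hy).trans_lt hlt
  · obtain ⟨n, -, h, h'⟩ := exists_maximal_prefixWord_mem_Lang (m := 0) (nil_mem_Lang u)
      (not_forall.mp hx)
    refine continuousAt_const.congr (f := fun _ => basePotential v u x) ?_
    filter_upwards [eventually_prefixWord_eq x (n + 1)] with y hy
    have hn : prefixWord y n = prefixWord x n :=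
      prefixWord_eq_iff.mpr fun j hj => prefixWord_eq_iff.mp hy j (by omega)
    rw [basePotential_eq h h', basePotential_eq (hn ▸ h) (hy ▸ h'), prefixWeight, prefixWeight, hn,
      prefixWord_eq_iff.mp hy 0 n.succ_pos]

/-- `V` is a continuous function that is zero on `K` and positive off `K`; this is the shape of the
potentials on which `R` is iterated. -/
structure VanishesExactlyOn {X : Type*} [TopologicalSpace X] (V : X → ℝ) (K : Set X) : Prop where
  continuous : Continuous V
  eq_zero : ∀ x ∈ K, V x = 0
  pos : ∀ x ∉ K, 0 < V x

theorem VanishesExactlyOn.nonneg {X : Type*} [TopologicalSpace X] {V : X → ℝ} {K : Set X}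
    (hV : VanishesExactlyOn V K) (x : X) : 0 ≤ V x :=
  (em (x ∈ K)).elim (fun h => (hV.eq_zero x h).ge) fun h => (hV.pos x h).le

theorem vanishesExactlyOn_basePotential [Finite A] (hv : ∀ a, 0 < v a) (h2 : TwoFull H u) :
    VanishesExactlyOn (basePotential v u) (orbitClosure u) where
  continuous := continuous_basePotential hv
  eq_zero _ hx := basePotential_eq_zero (mem_orbitClosure_iff.mp hx)
  pos x hx := basePotential_pos hv (h2 _ (length_prefixWord x 2)) <|
    not_forall.mp (mt mem_orbitClosure_iff.mpr hx)

theorem shift_iterate_substSeq_mem_orbitClosure (hne : ∀ a, H a ≠ []) (hu : IsFixedPointSubst H u)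
    (hx : x ∈ orbitClosure u) (i : ℕ) : shift^[i] (substSeq H x) ∈ orbitClosure u :=
  mem_orbitClosure_iff.mpr fun m =>
    prefixWord_substSeq_mem_Lang hne hu (mem_orbitClosure_iff.mp hx (i + m)) (le_cutPos hne x _)

theorem IsDesubstBound.mem_orbitClosure (hne : ∀ a, H a ≠ []) (hN : IsDesubstBound H u N)
    (hx : substSeq H x ∈ orbitClosure u) : x ∈ orbitClosure u :=
  mem_orbitClosure_iff.mpr fun n => prefixWord_mem_Lang_mono (show n ≤ N + n + 1 by omega) <|
    hN x (N + n) 0 (by omega) (List.length_pos_of_ne_nil (hne _)) (mem_orbitClosure_iff.mp hx _)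

protected theorem VanishesExactlyOn.renorm (hne : ∀ a, H a ≠ []) (hu : IsFixedPointSubst H u)
    (hN : IsDesubstBound H u N) (hV : VanishesExactlyOn V (orbitClosure u)) :
    VanishesExactlyOn (renorm H V) (orbitClosure u) where
  continuous := continuous_renorm hne hV.continuous
  eq_zero _ hx := Finset.sum_eq_zero fun i _ =>
    hV.eq_zero _ (shift_iterate_substSeq_mem_orbitClosure hne hu hx i)
  pos _ hx := Finset.sum_pos' (fun _ _ => hV.nonneg _)
    ⟨0, Finset.mem_range.mpr (List.length_pos_of_ne_nil (hne _)),
      hV.pos _ (mt (hN.mem_orbitClosure hne) hx)⟩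

theorem VanishesExactlyOn.iterate_renorm (hne : ∀ a, H a ≠ []) (hu : IsFixedPointSubst H u)
    (hN : IsDesubstBound H u N) (hV : VanishesExactlyOn V (orbitClosure u)) (m : ℕ) :
    VanishesExactlyOn ((renorm H)^[m] V) (orbitClosure u) := by
  induction m with
  | zero => exact hV
  | succ m ih => exact Function.iterate_succ_apply' (renorm H) m V ▸ ih.renorm hne hu hN

end Topology

/-- For a 2-full, marked, aperiodic and primitive substitution `H`
(with fixed point `u` and attractor `K = orbitClosure u`), there is a continuous
`U : Aᴺ → ℝ` with `R(U) = U`, vanishing identically on `K` and positive off `K`. -/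
theorem exists_fixed_potential
    {A : Type*} [Fintype A] [DecidableEq A] [TopologicalSpace A] [DiscreteTopology A]
    (hD : 2 ≤ Fintype.card A)
    (H : A → List A) (hne : ∀ a, H a ≠ [])
    (hprim : PrimitiveSubst H) (haper : AperiodicSubst H)
    (hmarked : MarkedSubst H hne)
    (u : ℕ → A) (hu : IsFixedPointSubst H u) (h2full : TwoFull H u) :
    ∃ U : (ℕ → A) → ℝ, Continuous U ∧ renorm H U = U ∧
      (∀ x ∈ orbitClosure u, U x = 0) ∧
      (∀ x ∉ orbitClosure u, 0 < U x) := by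
  have : Nontrivial A := Fintype.one_lt_card_iff_nontrivial.mp hD
  obtain ⟨N, hN⟩ := exists_isDesubstBound hprim haper hmarked hu
  obtain ⟨lam, v, hv⟩ := hprim.exists_isPerronWeight
  obtain ⟨m, hm⟩ := hprim.exists_le_length_substPow (N + 2)
  set V := basePotential v u
  obtain ⟨hcont, hzero, hpos⟩ :=
    (vanishesExactlyOn_basePotential hv.pos h2full).iterate_renorm hne hu hN m
  refine ⟨(renorm H)^[m] V, hcont, ?_, hzero, hpos⟩
  calc renorm H ((renorm H)^[m] V) = (renorm H)^[m] (renorm H V) := by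
        rw [← Function.iterate_succ_apply' (renorm H), Function.iterate_succ_apply]
    _ = renorm (substPow H m) (renorm H V) := iterate_renorm hne m _
    _ = renorm (substPow H m) V :=
        renorm_congr_of_twoFull (substPow_ne_nil hne m) (hu.substPow hne m) h2full hm
          fun _ hy => renorm_basePotential hne hu hv hN hy
    _ = (renorm H)^[m] V := (iterate_renorm hne m V).symm
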